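/- (Corollary 2.) In the CreditRisk⁺ model, fix a confidence level δ ∈ (0,1) and let q_δ(L) be the value-at-risk of L under P_α. Then P_α[L = q_δ(L)] > 0, and for every i = 1,…,n the VaR contribution satisfies E_α[N_i | L = q_δ(L)] = (S₀ r_{0,i} P_α[L = q_δ(L) − ν_i] + Σ_{j=1}^k α_j β_j r_{j,i} P_{α(j)}[L = q_δ(L) − ν_i]) / P_α[L = q_δ(L)], where P[L = q_δ(L) − ν_i] is interpreted as 0 when q_δ(L) < ν_i. -/

import Mathlib

open MeasureTheory ProbabilityTheory Real

noncomputable section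

/-- The gamma measure is sigma-finite (needed to form product measures). -/
instance gammaMeasure.instSigmaFinite (a r : ℝ) :
    SigmaFinite (gammaMeasure a r) := by
  unfold ProbabilityTheory.gammaMeasure ProbabilityTheory.gammaPDF
  infer_instance

/-- Conditional Poisson intensity `R_i(s) = r_{0,i} S_0 + sum_j r_{j,i} s_j`. -/
def crpR {n k : ℕ} (S0 : ℝ) (r0 : Fin n → ℝ) (r : Fin k → Fin n → ℝ)
    (s : Fin k → ℝ) (i : Fin n) : ℝ :=
  r0 i * S0 + ∑ j, r j i * s j

/-- The CreditRisk⁺ measure `P_α` on `(Fin k → ℝ) × (Fin n → ℕ)`: the product of the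
Gamma factor measures (shape `α j`, scale `β j`, i.e. rate `(β j)⁻¹`), composed with the
kernel sending the factor vector `s` to the product of Poisson measures with means `R_i(s)`,
recorded jointly with `s`. -/
def crpMeasure {n k : ℕ} (S0 : ℝ) (r0 : Fin n → ℝ) (r : Fin k → Fin n → ℝ)
    (α β : Fin k → ℝ) : Measure ((Fin k → ℝ) × (Fin n → ℕ)) :=
  (Measure.pi fun j => gammaMeasure (α j) (β j)⁻¹).bind fun s =>
    (Measure.pi fun i => poissonMeasure (crpR S0 r0 r s i).toNNReal).map fun x => (s, x)

/-- Portfolio loss `L = ∑ ν_i N_i`. -/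
def crpLoss {n k : ℕ} (ν : Fin n → ℕ) (x : (Fin k → ℝ) × (Fin n → ℕ)) : ℕ :=
  ∑ i, ν i * x.2 i

/-- Value-at-risk of the ℕ-valued loss `L` at level `δ`: the smallest `l` with
`P[L ≤ l] ≥ δ` (a natural number since `L` is ℕ-valued). -/
def crpVaR {n k : ℕ} (P : Measure ((Fin k → ℝ) × (Fin n → ℕ)))
    (ν : Fin n → ℕ) (δ : ℝ) : ℕ :=
  sInf {l : ℕ | ENNReal.ofReal δ ≤ P {x | crpLoss ν x ≤ l}}

/-- `ρ_g`, the radius of convergence of the probability generating function. -/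
def crpRadius {n k : ℕ} (ν : Fin n → ℕ) (r : Fin k → Fin n → ℝ) (β : Fin k → ℝ) : ℝ :=
  sSup {z : ℝ | 0 < z ∧ ∀ j, ∑ i, r j i * z ^ ν i < 1 + (β j)⁻¹}

/-!
Both ingredients of the model are stable under size-biasing. Weighting a Poisson variable of mean
`ρ` by its own value shifts it by one and produces the factor `ρ`; applied to `N_i` conditionally
on the factors, this turns `E_α[N_i 1_{L = q}]` into `E_α[R_i(S) 1_{L + ν_i = q}]`. Weighting the
density of a Gamma variable by its value raises the shape by one and produces the mean, so that
expanding the linear form `R_i(S)` yields the measures `P_{α(j)}`. Finally, `{L = q_δ(L)}` has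
positive probability because `q_δ(L)` is the least integer at which the distribution function of
`L` reaches `δ > 0`.
-/

open Set
open scoped ENNReal NNReal

section ProductMeasure

variable {ι : Type*} [Fintype ι] {X : ι → Type*} [∀ l, MeasurableSpace (X l)]

lemma map_update_pi_prod [DecidableEq ι] (μ μ' : ∀ l, Measure (X l)) [∀ l, SigmaFinite (μ l)]
    [∀ l, SigmaFinite (μ' l)] (j : ι) [IsProbabilityMeasure (μ j)]
    (hμ : ∀ l, l ≠ j → μ' l = μ l) :
    ((Measure.pi μ).prod (μ' j)).map (fun p => Function.update p.1 j p.2) = Measure.pi μ' := by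
  have hmeas : Measurable fun p : (∀ l, X l) × X j => Function.update p.1 j p.2 :=
    measurable_update'
  refine (Measure.pi_eq fun t ht => ?_).symm
  have hpre : (fun p : (∀ l, X l) × X j => Function.update p.1 j p.2) ⁻¹' univ.pi t
      = univ.pi (Function.update t j univ) ×ˢ t j := by
    ext p
    simp only [mem_preimage, mem_univ_pi, mem_prod]
    grind
  rw [Measure.map_apply hmeas (.univ_pi ht), hpre, Measure.prod_prod, Measure.pi_pi, mul_comm,
    ← Finset.mul_prod_erase _ _ (Finset.mem_univ j),
    ← Finset.mul_prod_erase Finset.univ (fun l => μ' l (t l)) (Finset.mem_univ j),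
    Function.update_self, measure_univ, one_mul]
  refine congrArg _ (Finset.prod_congr rfl fun l hl => ?_)
  rw [Function.update_of_ne (Finset.ne_of_mem_erase hl), hμ l (Finset.ne_of_mem_erase hl)]

lemma lintegral_pi_eq_lintegral_update [DecidableEq ι] (μ μ' : ∀ l, Measure (X l))
    [∀ l, SigmaFinite (μ l)] [∀ l, SigmaFinite (μ' l)] (j : ι) [IsProbabilityMeasure (μ j)]
    (hμ : ∀ l, l ≠ j → μ' l = μ l) {f : (∀ l, X l) → ℝ≥0∞} (hf : Measurable f) :
    ∫⁻ s, f s ∂Measure.pi μ'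
      = ∫⁻ s, ∫⁻ x, f (Function.update s j x) ∂μ' j ∂Measure.pi μ := by
  rw [← map_update_pi_prod μ μ' j hμ, lintegral_map hf measurable_update',
    lintegral_prod (fun p : (∀ l, X l) × X j => f (Function.update p.1 j p.2))
      (hf.comp measurable_update').aemeasurable]

lemma measurable_measurePi {Y : Type*} [MeasurableSpace Y] {μ : Y → ∀ l, Measure (X l)}
    [∀ y l, IsProbabilityMeasure (μ y l)] (hμ : ∀ l, Measurable fun y => μ y l) :
    Measurable fun y => Measure.pi (μ y) := by
  refine .measure_of_isPiSystem_of_isProbabilityMeasure generateFrom_pi.symm isPiSystem_pi ?_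
  rintro _ ⟨t, ht, rfl⟩
  simp only [Measure.pi_pi]
  exact Finset.measurable_prod _ fun l _ =>
    (Measure.measurable_coe (ht l (mem_univ l))).comp (hμ l)

end ProductMeasure

section Gamma

variable {a r : ℝ}

lemma gammaPDF_mul_ofReal (ha : 0 < a) (hr : 0 < r) (x : ℝ) :
    gammaPDF a r x * ENNReal.ofReal x = ENNReal.ofReal (a / r) * gammaPDF (a + 1) r x := by
  rcases lt_or_ge x 0 with hx | hx
  · simp only [gammaPDF_of_neg hx, zero_mul, mul_zero]
  · have hΓ : Gamma a ≠ 0 := (Gamma_pos_of_pos ha).ne'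
    have hxa : x ^ a = x ^ (a - 1) * x := by
      simpa using rpow_add_one' hx (y := a - 1) (by simpa using ha.ne')
    rw [gammaPDF_of_nonneg hx, gammaPDF_of_nonneg hx, ← ENNReal.ofReal_mul' hx,
      ← ENNReal.ofReal_mul (by positivity), Gamma_add_one ha.ne', add_sub_cancel_right, hxa,
      rpow_add_one hr.ne']
    congr 1
    field_simp

lemma lintegral_ofReal_mul_gammaMeasure (ha : 0 < a) (hr : 0 < r) {f : ℝ → ℝ≥0∞}
    (hf : Measurable f) :
    ∫⁻ x, ENNReal.ofReal x * f x ∂gammaMeasure a r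
      = ENNReal.ofReal (a / r) * ∫⁻ x, f x ∂gammaMeasure (a + 1) r := by
  have hpdf (b : ℝ) : Measurable (gammaPDF b r) := (measurable_gammaPDFReal b r).ennreal_ofReal
  rw [gammaMeasure, gammaMeasure,
    lintegral_withDensity_eq_lintegral_mul _ (hpdf a) (by fun_prop),
    lintegral_withDensity_eq_lintegral_mul _ (hpdf (a + 1)) hf,
    ← lintegral_const_mul _ ((hpdf (a + 1)).mul hf)]
  simp only [Pi.mul_apply, ← mul_assoc, gammaPDF_mul_ofReal ha hr]

lemma ae_nonneg_gammaMeasure (a r : ℝ) : ∀ᵐ x ∂gammaMeasure a r, 0 ≤ x := by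
  have hpdf : Measurable (gammaPDF a r) := (measurable_gammaPDFReal a r).ennreal_ofReal
  rw [gammaMeasure, ae_withDensity_iff hpdf]
  exact ae_of_all _ fun x hx => not_lt.1 fun hneg => hx (gammaPDF_of_neg hneg)

end Gamma

section Poisson

lemma natCast_succ_mul_poissonMeasure_singleton (ρ : ℝ≥0) (m : ℕ) :
    ((m + 1 : ℕ) : ℝ≥0∞) * poissonMeasure ρ {m + 1} = ρ * poissonMeasure ρ {m} := by
  rw [poissonMeasure_singleton, poissonMeasure_singleton, ← ENNReal.ofReal_natCast,
    ← ENNReal.ofReal_coe_nnreal, ← ENNReal.ofReal_mul (by positivity),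
    ← ENNReal.ofReal_mul (by positivity), Nat.factorial_succ]
  congr 1
  push_cast
  field_simp
  ring

lemma lintegral_natCast_mul_poissonMeasure (ρ : ℝ≥0) (f : ℕ → ℝ≥0∞) :
    ∫⁻ m, m * f m ∂poissonMeasure ρ = ρ * ∫⁻ m, f (m + 1) ∂poissonMeasure ρ := by
  rw [lintegral_countable', lintegral_countable', tsum_eq_zero_add' ENNReal.summable,
    ← ENNReal.tsum_mul_left, Nat.cast_zero, zero_mul, zero_mul, zero_add]
  refine tsum_congr fun m => ?_
  rw [mul_right_comm, natCast_succ_mul_poissonMeasure_singleton, mul_assoc,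
    mul_comm (poissonMeasure ρ {m})]

lemma lintegral_natCast_mul_pi_poissonMeasure {ι : Type*} [Fintype ι] [DecidableEq ι]
    (ρ : ι → ℝ≥0) (i : ι) (f : (ι → ℕ) → ℝ≥0∞) :
    ∫⁻ x, x i * f x ∂Measure.pi (fun l => poissonMeasure (ρ l))
      = ρ i * ∫⁻ x, f (x + Pi.single i 1) ∂Measure.pi (fun l => poissonMeasure (ρ l)) := by
  have hresample (g : (ι → ℕ) → ℝ≥0∞) :
      ∫⁻ x, g x ∂Measure.pi (fun l => poissonMeasure (ρ l))
        = ∫⁻ x, ∫⁻ m, g (Function.update x i m) ∂poissonMeasure (ρ i)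
            ∂Measure.pi (fun l => poissonMeasure (ρ l)) :=
    lintegral_pi_eq_lintegral_update _ _ i (fun _ _ => rfl) (measurable_of_countable g)
  have hshift (x : ι → ℕ) (m : ℕ) :
      Function.update x i m + Pi.single i 1 = Function.update x i (m + 1) := by
    ext l
    rcases eq_or_ne l i with rfl | hl <;> simp [*]
  calc ∫⁻ x, x i * f x ∂Measure.pi (fun l => poissonMeasure (ρ l))
    _ = ∫⁻ x, ∫⁻ m, m * f (Function.update x i m) ∂poissonMeasure (ρ i)
          ∂Measure.pi (fun l => poissonMeasure (ρ l)) := by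
      rw [hresample]
      simp only [Function.update_self]
    _ = ρ i * ∫⁻ x, ∫⁻ m, f (Function.update x i m + Pi.single i 1) ∂poissonMeasure (ρ i)
          ∂Measure.pi (fun l => poissonMeasure (ρ l)) := by
      simp only [lintegral_natCast_mul_poissonMeasure, hshift,
        lintegral_const_mul _ (measurable_of_countable _)]
    _ = ρ i * ∫⁻ x, f (x + Pi.single i 1) ∂Measure.pi (fun l => poissonMeasure (ρ l)) :=
      congrArg _ (hresample fun x => f (x + Pi.single i 1)).symm

lemma measurable_poissonMeasure : Measurable poissonMeasure := by
  refine Measure.measurable_of_measurable_coe _ fun t ht => ?_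
  simp only [poissonMeasure, Measure.sum_apply _ ht, Measure.smul_apply, smul_eq_mul]
  fun_prop

end Poisson

section NatValued

variable {Ω : Type*} [MeasurableSpace Ω] (μ : Measure Ω) (X : Ω → ℕ)

lemma measure_eq_sInf_le_measure_pos {δ : ℝ≥0∞} (hδ₀ : 0 < δ) (hδ : δ < μ univ) :
    0 < μ {ω | X ω = sInf {l : ℕ | δ ≤ μ {ω | X ω ≤ l}}} := by
  have hne : {l : ℕ | δ ≤ μ {ω | X ω ≤ l}}.Nonempty := by
    have hmono : Monotone fun l : ℕ => {ω | X ω ≤ l} := fun _ _ hab _ hω => le_trans hω hab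
    have hunion : ⋃ l : ℕ, {ω | X ω ≤ l} = univ :=
      iUnion_eq_univ_iff.2 fun ω => ⟨X ω, le_refl (X ω)⟩
    have hlim := tendsto_measure_iUnion_atTop (μ := μ) hmono
    rw [hunion] at hlim
    obtain ⟨l, hl⟩ := (hlim.eventually (lt_mem_nhds hδ)).exists
    exact ⟨l, hl.le⟩
  have hle := Nat.sInf_mem hne
  have hmin : ∀ l < sInf {l : ℕ | δ ≤ μ {ω | X ω ≤ l}}, μ {ω | X ω ≤ l} < δ :=
    fun l hl => not_le.1 (Nat.notMem_of_lt_sInf hl)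
  generalize sInf {l : ℕ | δ ≤ μ {ω | X ω ≤ l}} = q at hle hmin ⊢
  have hlt : μ {ω | X ω < q} < δ := by
    cases q with
    | zero => simpa using hδ₀
    | succ m => simpa only [Nat.lt_succ_iff] using hmin m m.lt_succ_self
  refine pos_iff_ne_zero.2 fun hzero => hlt.not_ge ?_
  calc
    δ ≤ μ {ω | X ω ≤ q} := hle
    _ ≤ μ ({ω | X ω < q} ∪ {ω | X ω = q}) := measure_mono fun ω (hω : X ω ≤ q) => hω.lt_or_eq
    _ ≤ μ {ω | X ω < q} + μ {ω | X ω = q} := measure_union_le _ _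
    _ = μ {ω | X ω < q} := by rw [hzero, add_zero]

lemma measureReal_add_eq (a q : ℕ) :
    μ.real {ω | X ω + a = q} = if a ≤ q then μ.real {ω | X ω = q - a} else 0 := by
  split_ifs with h
  · congr 1
    ext ω
    simp only [mem_ofPred_eq]
    omega
  · have hempty : {ω | X ω + a = q} = ∅ := eq_empty_of_forall_notMem fun ω hω => by
      simp only [mem_ofPred_eq] at hω
      omega
    rw [hempty, measureReal_empty]

end NatValued

section CreditRisk

variable {n k : ℕ} {S0 : ℝ} {r0 : Fin n → ℝ} {r : Fin k → Fin n → ℝ} {α β : Fin k → ℝ}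

/-- The joint law of the risk factors: the product of the `Gamma(α_j, β_j)` distributions, with
`β_j` the scale and hence `(β_j)⁻¹` the rate. -/
def crpFactorMeasure (α β : Fin k → ℝ) : Measure (Fin k → ℝ) :=
  Measure.pi fun j => gammaMeasure (α j) (β j)⁻¹

instance (α β : Fin k → ℝ) : SigmaFinite (crpFactorMeasure α β) := by
  unfold crpFactorMeasure
  infer_instance

lemma isProbabilityMeasure_crpFactorMeasure (hα : ∀ j, 0 < α j) (hβ : ∀ j, 0 < β j) :
    IsProbabilityMeasure (crpFactorMeasure α β) := by
  have (j : Fin k) : IsProbabilityMeasure (gammaMeasure (α j) (β j)⁻¹) :=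
    isProbabilityMeasure_gammaMeasure (hα j) (inv_pos.2 (hβ j))
  unfold crpFactorMeasure
  infer_instance

lemma ae_nonneg_crpFactorMeasure (α β : Fin k → ℝ) :
    ∀ᵐ s ∂crpFactorMeasure α β, ∀ j, 0 ≤ s j :=
  ae_all_iff.2 fun j => (Measure.quasiMeasurePreserving_eval
    (fun l => gammaMeasure (α l) (β l)⁻¹) j).ae (ae_nonneg_gammaMeasure (α j) (β j)⁻¹)

lemma lintegral_ofReal_mul_crpFactorMeasure (hα : ∀ j, 0 < α j) (hβ : ∀ j, 0 < β j) (j : Fin k)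
    {f : (Fin k → ℝ) → ℝ≥0∞} (hf : Measurable f) :
    ∫⁻ s, ENNReal.ofReal (s j) * f s ∂crpFactorMeasure α β
      = ENNReal.ofReal (α j * β j)
        * ∫⁻ s, f s ∂crpFactorMeasure (Function.update α j (α j + 1)) β := by
  have hβj := inv_pos.2 (hβ j)
  have := isProbabilityMeasure_gammaMeasure (hα j) hβj
  have hsection (s : Fin k → ℝ) : Measurable fun x => f (Function.update s j x) :=
    hf.comp (measurable_update s)
  simp only [crpFactorMeasure]
  rw [lintegral_pi_eq_lintegral_update (fun l => gammaMeasure (α l) (β l)⁻¹) _ j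
      (fun _ _ => rfl) (by fun_prop),
    lintegral_pi_eq_lintegral_update (fun l => gammaMeasure (α l) (β l)⁻¹)
      (fun l => gammaMeasure (Function.update α j (α j + 1) l) (β l)⁻¹) j
      (fun l hl => by rw [Function.update_of_ne hl]) hf]
  simp only [Function.update_self, lintegral_ofReal_mul_gammaMeasure (hα j) hβj (hsection _),
    div_inv_eq_mul]
  exact lintegral_const_mul _ (hf.comp measurable_update').lintegral_prod_right'

lemma lintegral_crpR_mul_crpFactorMeasure (hα : ∀ j, 0 < α j) (hβ : ∀ j, 0 < β j)
    {i : Fin n} (hS0 : 0 ≤ S0 * r0 i) (hr : ∀ j, 0 ≤ r j i)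
    {f : (Fin k → ℝ) → ℝ≥0∞} (hf : Measurable f) :
    ∫⁻ s, ENNReal.ofReal (crpR S0 r0 r s i) * f s ∂crpFactorMeasure α β
      = ENNReal.ofReal (S0 * r0 i) * ∫⁻ s, f s ∂crpFactorMeasure α β
        + ∑ j, ENNReal.ofReal (α j * β j * r j i)
          * ∫⁻ s, f s ∂crpFactorMeasure (Function.update α j (α j + 1)) β := by
  have hexpand : ∀ᵐ s ∂crpFactorMeasure α β,
      ENNReal.ofReal (crpR S0 r0 r s i) * f s = ENNReal.ofReal (S0 * r0 i) * f s
        + ∑ j, ENNReal.ofReal (r j i) * (ENNReal.ofReal (s j) * f s) := by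
    filter_upwards [ae_nonneg_crpFactorMeasure α β] with s hs
    have hnonneg : ∀ j ∈ Finset.univ, 0 ≤ r j i * s j := fun j _ => mul_nonneg (hr j) (hs j)
    rw [crpR, mul_comm (r0 i), ENNReal.ofReal_add hS0 (Finset.sum_nonneg hnonneg),
      ENNReal.ofReal_sum_of_nonneg hnonneg, add_mul, Finset.sum_mul]
    simp only [ENNReal.ofReal_mul (hr _), mul_assoc]
  rw [lintegral_congr_ae hexpand, lintegral_add_left (by fun_prop), lintegral_const_mul _ hf,
    lintegral_finsetSum _ (by fun_prop)]
  refine congrArg _ (Finset.sum_congr rfl fun j _ => ?_)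
  rw [lintegral_const_mul _ (by fun_prop), lintegral_ofReal_mul_crpFactorMeasure hα hβ j hf,
    ← mul_assoc, ← ENNReal.ofReal_mul (hr j), mul_comm (r j i)]

/-- The conditional law of the default counts given the risk factors `s`: independent Poisson
counts with intensities `R_i(s)`. Negative intensities, which have probability zero, are
truncated to `0`. -/
def crpCountKernel (S0 : ℝ) (r0 : Fin n → ℝ) (r : Fin k → Fin n → ℝ) :
    Kernel (Fin k → ℝ) (Fin n → ℕ) where
  toFun s := Measure.pi fun i => poissonMeasure (crpR S0 r0 r s i).toNNReal
  measurable' := measurable_measurePi fun i =>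
    measurable_poissonMeasure.comp (by unfold crpR; fun_prop)

instance : IsMarkovKernel (crpCountKernel S0 r0 r) where
  isProbabilityMeasure s :=
    inferInstanceAs (IsProbabilityMeasure
      (Measure.pi fun i => poissonMeasure (crpR S0 r0 r s i).toNNReal))

lemma crpMeasure_eq_compProd (S0 : ℝ) (r0 : Fin n → ℝ) (r : Fin k → Fin n → ℝ)
    (α β : Fin k → ℝ) :
    crpMeasure S0 r0 r α β = crpFactorMeasure α β ⊗ₘ crpCountKernel S0 r0 r := by
  rw [Measure.compProd_eq_comp_prod, crpMeasure, crpFactorMeasure]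
  congr 1
  ext1 s
  rw [Kernel.prod_apply, Kernel.id_apply, Measure.dirac_prod]
  rfl

lemma isProbabilityMeasure_crpMeasure (hα : ∀ j, 0 < α j) (hβ : ∀ j, 0 < β j) :
    IsProbabilityMeasure (crpMeasure S0 r0 r α β) := by
  have := isProbabilityMeasure_crpFactorMeasure hα hβ
  rw [crpMeasure_eq_compProd]
  infer_instance

lemma lintegral_crpMeasure {f : (Fin k → ℝ) × (Fin n → ℕ) → ℝ≥0∞} (hf : Measurable f) :
    ∫⁻ x, f x ∂crpMeasure S0 r0 r α β
      = ∫⁻ s, ∫⁻ y, f (s, y) ∂crpCountKernel S0 r0 r s ∂crpFactorMeasure α β := by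
  rw [crpMeasure_eq_compProd, Measure.lintegral_compProd hf]

lemma lintegral_count_mul_crpMeasure (hα : ∀ j, 0 < α j) (hβ : ∀ j, 0 < β j)
    {i : Fin n} (hS0 : 0 ≤ S0 * r0 i) (hr : ∀ j, 0 ≤ r j i)
    {f : (Fin k → ℝ) × (Fin n → ℕ) → ℝ≥0∞} (hf : Measurable f) :
    ∫⁻ x, x.2 i * f x ∂crpMeasure S0 r0 r α β
      = ENNReal.ofReal (S0 * r0 i)
          * ∫⁻ x, f (x.1, x.2 + Pi.single i 1) ∂crpMeasure S0 r0 r α β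
        + ∑ j, ENNReal.ofReal (α j * β j * r j i)
          * ∫⁻ x, f (x.1, x.2 + Pi.single i 1)
            ∂crpMeasure S0 r0 r (Function.update α j (α j + 1)) β := by
  have hshift : Measurable fun x : (Fin k → ℝ) × (Fin n → ℕ) => f (x.1, x.2 + Pi.single i 1) := by
    fun_prop
  have hcond (s : Fin k → ℝ) : ∫⁻ y, y i * f (s, y) ∂crpCountKernel S0 r0 r s
      = ENNReal.ofReal (crpR S0 r0 r s i)
        * ∫⁻ y, f (s, y + Pi.single i 1) ∂crpCountKernel S0 r0 r s :=
    lintegral_natCast_mul_pi_poissonMeasure _ i _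
  rw [lintegral_crpMeasure (by fun_prop)]
  simp only [hcond, lintegral_crpMeasure hshift]
  exact lintegral_crpR_mul_crpFactorMeasure hα hβ hS0 hr hshift.lintegral_kernel_prod_right'

lemma measurable_crpLoss (ν : Fin n → ℕ) :
    Measurable (crpLoss ν : (Fin k → ℝ) × (Fin n → ℕ) → ℕ) := by
  unfold crpLoss
  fun_prop

lemma crpLoss_add_single (ν : Fin n → ℕ) (s : Fin k → ℝ) (y : Fin n → ℕ) (i : Fin n) :
    crpLoss ν (s, y + Pi.single i 1) = crpLoss ν (s, y) + ν i := by
  simp [crpLoss, mul_add, Finset.sum_add_distrib, Pi.single_apply]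

lemma setLIntegral_count_crpLoss_eq (hα : ∀ j, 0 < α j) (hβ : ∀ j, 0 < β j)
    {i : Fin n} (hS0 : 0 ≤ S0 * r0 i) (hr : ∀ j, 0 ≤ r j i) (ν : Fin n → ℕ) (q : ℕ) :
    ∫⁻ x in {x | crpLoss ν x = q}, x.2 i ∂crpMeasure S0 r0 r α β
      = ENNReal.ofReal (S0 * r0 i) * crpMeasure S0 r0 r α β {x | crpLoss ν x + ν i = q}
        + ∑ j, ENNReal.ofReal (α j * β j * r j i)
          * crpMeasure S0 r0 r (Function.update α j (α j + 1)) β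
            {x | crpLoss ν x + ν i = q} := by
  have hL : MeasurableSet {x : (Fin k → ℝ) × (Fin n → ℕ) | crpLoss ν x = q} :=
    measurable_crpLoss ν (measurableSet_singleton q)
  have hLν : MeasurableSet {x : (Fin k → ℝ) × (Fin n → ℕ) | crpLoss ν x + ν i = q} :=
    ((measurable_crpLoss ν).add_const (ν i)) (measurableSet_singleton q)
  have hshift (x : (Fin k → ℝ) × (Fin n → ℕ)) :
      {x | crpLoss ν x = q}.indicator (1 : (Fin k → ℝ) × (Fin n → ℕ) → ℝ≥0∞)
          (x.1, x.2 + Pi.single i 1)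
        = {x | crpLoss ν x + ν i = q}.indicator 1 x := by
    simp only [indicator_apply, mem_ofPred_eq, crpLoss_add_single, Pi.one_apply]
  have hweight (x : (Fin k → ℝ) × (Fin n → ℕ)) :
      {x | crpLoss ν x = q}.indicator (fun x => (x.2 i : ℝ≥0∞)) x
        = x.2 i * {x | crpLoss ν x = q}.indicator 1 x := by
    simp [indicator_apply]
  simp only [← lintegral_indicator hL, hweight,
    lintegral_count_mul_crpMeasure hα hβ hS0 hr (measurable_one.indicator hL), hshift,
    lintegral_indicator_one hLν]

lemma setIntegral_count_crpLoss_eq (hα : ∀ j, 0 < α j) (hβ : ∀ j, 0 < β j)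
    {i : Fin n} (hS0 : 0 ≤ S0 * r0 i) (hr : ∀ j, 0 ≤ r j i) (ν : Fin n → ℕ) (q : ℕ) :
    ∫ x in {x | crpLoss ν x = q}, (x.2 i : ℝ) ∂crpMeasure S0 r0 r α β
      = S0 * r0 i * (crpMeasure S0 r0 r α β).real {x | crpLoss ν x + ν i = q}
        + ∑ j, α j * β j * r j i
          * (crpMeasure S0 r0 r (Function.update α j (α j + 1)) β).real
            {x | crpLoss ν x + ν i = q} := by
  have hα_succ (j l : Fin k) : 0 < Function.update α j (α j + 1) l := by
    rcases eq_or_ne l j with rfl | hl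
    · simpa using add_pos (hα l) one_pos
    · simpa [hl] using hα l
  have := isProbabilityMeasure_crpMeasure (S0 := S0) (r0 := r0) (r := r) hα hβ
  have (j : Fin k) := isProbabilityMeasure_crpMeasure (S0 := S0) (r0 := r0) (r := r) (hα_succ j) hβ
  have hcoef (j : Fin k) : 0 ≤ α j * β j * r j i :=
    mul_nonneg (mul_nonneg (hα j).le (hβ j).le) (hr j)
  have hcount : Measurable fun x : (Fin k → ℝ) × (Fin n → ℕ) => (x.2 i : ℝ) := by fun_prop
  rw [integral_eq_lintegral_of_nonneg_ae (ae_of_all _ fun _ => Nat.cast_nonneg _)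
    hcount.aestronglyMeasurable]
  simp only [ENNReal.ofReal_natCast]
  rw [setLIntegral_count_crpLoss_eq hα hβ hS0 hr,
    ENNReal.toReal_add (by finiteness) (ENNReal.sum_ne_top.2 fun j _ => by finiteness),
    ENNReal.toReal_sum fun j _ => by finiteness]
  simp only [ENNReal.toReal_mul, ENNReal.toReal_ofReal hS0, ENNReal.toReal_ofReal (hcoef _),
    measureReal_def]

end CreditRisk

theorem crp_var_contribution_general {n k : ℕ} (ν : Fin n → ℕ) {S0 : ℝ} (hS0 : 0 ≤ S0)
    {r0 : Fin n → ℝ} {r : Fin k → Fin n → ℝ} (hr0 : ∀ i, 0 ≤ r0 i) (hr : ∀ j i, 0 ≤ r j i)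
    {α β : Fin k → ℝ} (hα : ∀ j, 0 < α j) (hβ : ∀ j, 0 < β j)
    {δ : ℝ} (hδ : δ ∈ Ioo 0 1) (i : Fin n) :
    let P := fun α' => crpMeasure S0 r0 r α' β
    let q := crpVaR (P α) ν δ
    0 < P α {x | crpLoss ν x = q} ∧
      (∫ x in {x | crpLoss ν x = q}, (x.2 i : ℝ) ∂P α) / (P α).real {x | crpLoss ν x = q}
        = (S0 * r0 i * (if ν i ≤ q then (P α).real {x | crpLoss ν x = q - ν i} else 0)
          + ∑ j, α j * β j * r j i * (if ν i ≤ q then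
              (P (Function.update α j (α j + 1))).real {x | crpLoss ν x = q - ν i} else 0))
          / (P α).real {x | crpLoss ν x = q} := by
  intro P q
  have : IsProbabilityMeasure (P α) := isProbabilityMeasure_crpMeasure hα hβ
  refine ⟨measure_eq_sInf_le_measure_pos (P α) (crpLoss ν) ?_ ?_, ?_⟩
  · exact ENNReal.ofReal_pos.2 hδ.1
  · rw [measure_univ]
    exact ENNReal.ofReal_lt_one.2 hδ.2
  · simp only [P, ← measureReal_add_eq,
      setIntegral_count_crpLoss_eq hα hβ (mul_nonneg hS0 (hr0 i)) (hr · i)]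

/-- Corollary 2: `P_α[L = q_δ(L)] > 0` and the VaR contribution satisfies
`E_α[N_i | L = q_δ(L)] = (S₀ r_{0,i} P_α[L = q−ν_i] + ∑_j α_j β_j r_{j,i} P_{α(j)}[L = q−ν_i])
/ P_α[L = q]`, with `P[L = q − ν_i]` interpreted as `0` when `q < ν_i`. -/
theorem crp_var_contribution {n k : ℕ} (hn : 0 < n) (hk : 0 < k)
    (ν : Fin n → ℕ) (hν : ∀ i, 0 < ν i)
    (S0 : ℝ) (hS0 : 0 ≤ S0)
    (r0 : Fin n → ℝ) (r : Fin k → Fin n → ℝ)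
    (hr0 : ∀ i, 0 ≤ r0 i) (hr : ∀ j i, 0 ≤ r j i)
    (hr0sum : ∑ i, r0 i = 1) (hrsum : ∀ j, ∑ i, r j i = 1)
    (hrpos : ∀ i, 0 < ∑ j, r j i)
    (α β : Fin k → ℝ) (hα : ∀ j, 0 < α j) (hβ : ∀ j, 0 < β j)
    (δ : ℝ) (hδ : δ ∈ Set.Ioo (0 : ℝ) 1) (i : Fin n) :
    0 < (crpMeasure S0 r0 r α β)
        {x | crpLoss ν x = crpVaR (crpMeasure S0 r0 r α β) ν δ} ∧
    (∫ x in {y | crpLoss ν y = crpVaR (crpMeasure S0 r0 r α β) ν δ},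
        (x.2 i : ℝ) ∂(crpMeasure S0 r0 r α β)) /
      ((crpMeasure S0 r0 r α β)
        {x | crpLoss ν x = crpVaR (crpMeasure S0 r0 r α β) ν δ}).toReal
      = (S0 * r0 i *
          (if ν i ≤ crpVaR (crpMeasure S0 r0 r α β) ν δ then
            ((crpMeasure S0 r0 r α β)
              {x | crpLoss ν x = crpVaR (crpMeasure S0 r0 r α β) ν δ - ν i}).toReal
           else 0)
         + ∑ j, α j * β j * r j i *
          (if ν i ≤ crpVaR (crpMeasure S0 r0 r α β) ν δ then
            ((crpMeasure S0 r0 r (Function.update α j (α j + 1)) β)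
              {x | crpLoss ν x = crpVaR (crpMeasure S0 r0 r α β) ν δ - ν i}).toReal
           else 0)) /
        ((crpMeasure S0 r0 r α β)
          {x | crpLoss ν x = crpVaR (crpMeasure S0 r0 r α β) ν δ}).toReal :=
  crp_var_contribution_general ν hS0 hr0 hr hα hβ hδ i
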